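/- Let k ≥ 2, κ := 2^{k−1}, ε ∈ (0,1), let Q0 ≥ 2 be a real number, let q1 ∈ ℤ[i] \ {0} and r1, j ∈ ℤ[i]. Set S_k(q1,r1,j) := ∑_{q∈ℤ[i]} exp(−π N(q)/(κ Q0)) · e(Re(j r1 q^k / q1^k)). Then |S_k(q1,r1,j)|^κ ≤ C(k,ε) · Q0^{κ−k+ε} · ∑_{α=(α_1,…,α_{k−1})∈ℤ[i]^{k−1}, N(α_v)≤Q0^{1+ε} for all v} | ∑_{q∈ℤ[i]} exp(−(π/(κQ0)) · ∑_{u∈{0,1}^{k−1}} N(u·α + q)) · e(Re((j r1 / q1^k) · k!·α_1⋯α_{k−1}·(q + (α_1 + ⋯ + α_{k−1})/2))) |, where u·α := u_1α_1 + ⋯ + u_{k−1}α_{k−1} and C(k,ε) depends only on k and ε. -/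

import Mathlib

noncomputable section

/-- `e(t) = exp(2πit)`. -/
def e (t : ℝ) : ℂ := Complex.exp (2 * Real.pi * Complex.I * t)

/-- The norm of a Gaussian integer, as a real number. -/
def gN (z : GaussianInt) : ℝ := (z.re : ℝ) ^ 2 + (z.im : ℝ) ^ 2

/-- The smoothed `k`-th power Gauss-type sum
`S_k(q₁,r₁,j) = ∑_{q ∈ ℤ[i]} exp(-π N(q)/(κQ₀)) e(Re(j r₁ q^k/q₁^k))`, `κ = 2^{k-1}`. -/
def Sk (k : ℕ) (Q0 : ℝ) (q1 r1 j : GaussianInt) : ℂ :=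
  ∑' q : GaussianInt,
    ((Real.exp (-Real.pi * gN q / ((2 : ℝ) ^ (k - 1) * Q0)) : ℝ) : ℂ)
      * e (((j : ℂ) * (r1 : ℂ) * (q : ℂ) ^ k / (q1 : ℂ) ^ k).re)

/-! ### Gaussian sums over the Gaussian integers -/

lemma wd_sum_int {a : ℝ} (ha : 0 < a) :
    Summable (fun n : ℤ => Real.exp (-Real.pi * a * (n : ℝ) ^ 2)) := by
  have h := summable_pow_mul_jacobiTheta₂_term_bound 0 ha 0
  refine h.congr fun n => ?_
  simp
  ring

lemma wd_int_le {a : ℝ} (ha : 0 < a) (ha1 : a ≤ 1) :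
    ∑' n : ℤ, Real.exp (-Real.pi * a * (n : ℝ) ^ 2) ≤
      1 / a ^ (1 / 2 : ℝ) * ∑' n : ℤ, Real.exp (-Real.pi * 1 * (n : ℝ) ^ 2) := by
  rw [Real.tsum_exp_neg_mul_int_sq ha]
  refine mul_le_mul_of_nonneg_left ?_ (by positivity)
  have h1 : Summable (fun n : ℤ => Real.exp (-Real.pi / a * (n : ℝ) ^ 2)) := by
    refine (wd_sum_int (a := 1 / a) (by positivity)).congr fun n => ?_
    congr 1
    ring
  refine h1.tsum_le_tsum (fun n => ?_) (wd_sum_int one_pos)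
  apply Real.exp_le_exp.mpr
  refine mul_le_mul_of_nonneg_right ?_ (sq_nonneg _)
  rw [mul_one, div_le_iff₀ ha]
  nlinarith [Real.pi_pos]

def wdEquiv : GaussianInt ≃ ℤ × ℤ where
  toFun z := (z.re, z.im)
  invFun p := ⟨p.1, p.2⟩
  left_inv _ := rfl
  right_inv _ := rfl

lemma wd_exp_gN (a : ℝ) (q : GaussianInt) : Real.exp (-(Real.pi * a) * gN q) =
    Real.exp (-Real.pi * a * ((wdEquiv q).1 : ℝ) ^ 2) *
      Real.exp (-Real.pi * a * ((wdEquiv q).2 : ℝ) ^ 2) := by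
  rw [← Real.exp_add]
  congr 1
  simp only [gN, wdEquiv, Equiv.coe_fn_mk]
  ring

lemma wd_prod_sum {a : ℝ} (ha : 0 < a) : Summable (fun p : ℤ × ℤ =>
    Real.exp (-Real.pi * a * (p.1 : ℝ) ^ 2) * Real.exp (-Real.pi * a * (p.2 : ℝ) ^ 2)) :=
  (wd_sum_int ha).mul_of_nonneg (wd_sum_int ha) (fun _ => (Real.exp_pos _).le)
    (fun _ => (Real.exp_pos _).le)

lemma wd_sum_gN {a : ℝ} (ha : 0 < a) :
    Summable (fun q : GaussianInt => Real.exp (-(Real.pi * a) * gN q)) := by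
  have h := (wdEquiv.summable_iff).mpr (wd_prod_sum ha)
  refine h.congr fun q => ?_
  rw [wd_exp_gN]
  rfl

def wdC : ℝ := (∑' n : ℤ, Real.exp (-Real.pi * 1 * (n : ℝ) ^ 2)) ^ 2

lemma wdC_nonneg : 0 ≤ wdC := sq_nonneg _

lemma wd_gN_le {a : ℝ} (ha : 0 < a) (ha1 : a ≤ 1) :
    ∑' q : GaussianInt, Real.exp (-(Real.pi * a) * gN q) ≤ wdC / a := by
  have h1 : ∑' q : GaussianInt, Real.exp (-(Real.pi * a) * gN q) =
      (∑' n : ℤ, Real.exp (-Real.pi * a * (n : ℝ) ^ 2)) ^ 2 := by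
    rw [sq, (wd_sum_int ha).tsum_mul_tsum (wd_sum_int ha) (wd_prod_sum ha),
      ← wdEquiv.tsum_eq]
    exact tsum_congr fun q => wd_exp_gN a q
  rw [h1]
  have h2 : 0 ≤ ∑' n : ℤ, Real.exp (-Real.pi * a * (n : ℝ) ^ 2) :=
    tsum_nonneg fun _ => (Real.exp_pos _).le
  calc _ ≤ (1 / a ^ (1 / 2 : ℝ) * ∑' n : ℤ, Real.exp (-Real.pi * 1 * (n : ℝ) ^ 2)) ^ 2 :=
        pow_le_pow_left₀ h2 (wd_int_le ha ha1) 2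
    _ = wdC / a := by
        rw [mul_pow, wdC, div_pow, ← Real.rpow_natCast (a ^ (1 / 2 : ℝ)), ← Real.rpow_mul ha.le]
        norm_num
        ring

lemma gN_nonneg (z : GaussianInt) : 0 ≤ gN z := by unfold gN; positivity

lemma gN_zero : gN 0 = 0 := by simp [gN]

lemma gN_par (p q : GaussianInt) : gN p ≤ 2 * gN (q + p) + 2 * gN q := by
  simp only [gN, Zsqrtd.re_add, Zsqrtd.im_add, Int.cast_add]
  nlinarith [sq_nonneg ((p.re : ℝ) + 2 * q.re), sq_nonneg ((p.im : ℝ) + 2 * q.im)]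

/-- Ball is finite with cardinality `≪ R`. -/
lemma wd_ball {R : ℝ} (hR : 1 ≤ R) : ∃ A : Finset GaussianInt,
    (∀ q, q ∈ A ↔ gN q ≤ R) ∧ (A.card : ℝ) ≤ Real.exp Real.pi * wdC * R := by
  have ha : 0 < 1 / R := by positivity
  have hs := wd_sum_gN ha
  have hlow : ∀ q : GaussianInt, gN q ≤ R →
      Real.exp (-Real.pi) ≤ Real.exp (-(Real.pi * (1 / R)) * gN q) := by
    intro q hq
    apply Real.exp_le_exp.mpr
    have : gN q / R ≤ 1 := (div_le_one (by positivity)).mpr hq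
    have h2 : -(Real.pi * (1 / R)) * gN q = -(Real.pi * (gN q / R)) := by ring
    rw [h2]
    nlinarith [Real.pi_pos]
  have hfin : {q : GaussianInt | gN q ≤ R}.Finite := by
    have h := hs.tendsto_cofinite_zero.eventually (gt_mem_nhds (Real.exp_pos (-Real.pi)))
    rw [Filter.eventually_cofinite] at h
    refine h.subset fun q hq => ?_
    simp only [Set.mem_ofPred_eq, not_lt]
    exact hlow q hq
  refine ⟨hfin.toFinset, fun q => by simp, ?_⟩
  have h1 : (hfin.toFinset.card : ℝ) * Real.exp (-Real.pi) ≤ wdC / (1 / R) := by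
    refine le_trans ?_ (wd_gN_le ha ((div_le_one (by positivity)).mpr hR))
    refine le_trans ?_ (hs.sum_le_tsum hfin.toFinset fun _ _ => (Real.exp_pos _).le)
    rw [← nsmul_eq_mul]
    exact Finset.card_nsmul_le_sum _ _ _ fun q hq => hlow q (by simpa using hq)
  rw [Real.exp_neg, div_div_eq_mul_div, div_one] at h1
  rw [← div_eq_mul_inv, div_le_iff₀ (Real.exp_pos _)] at h1
  linarith

/-! ### Abstract differencing -/

/-- Multiplicative difference. -/
def wdD (β : GaussianInt) (F : GaussianInt → ℂ) : GaussianInt → ℂ :=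
  fun q => F (q + β) * (starRingEnd ℂ) (F q)

def wdIt : (m : ℕ) → (Fin m → GaussianInt) → (GaussianInt → ℂ) → (GaussianInt → ℂ)
  | 0, _, F => F
  | m + 1, α, F => wdD (α 0) (wdIt m (fun i => α i.succ) F)

lemma wdIt_le {F : GaussianInt → ℂ} (hF : ∀ q, ‖F q‖ ≤ 1) : ∀ (m : ℕ) (α : Fin m → GaussianInt)
    (q : GaussianInt), ‖wdIt m α F q‖ ≤ ‖F q‖ := by
  intro m
  induction m with
  | zero => intro α q; exact le_rfl
  | succ m ih =>
    intro α q
    simp only [wdIt, wdD, norm_mul, RCLike.norm_conj]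
    have h1 := ih (fun i => α i.succ) (q + α 0)
    have h2 := ih (fun i => α i.succ) q
    calc _ ≤ 1 * ‖F q‖ := mul_le_mul (h1.trans (hF _)) h2 (norm_nonneg _) zero_le_one
      _ = _ := one_mul _

def wdShear : GaussianInt × GaussianInt ≃ GaussianInt × GaussianInt where
  toFun p := (p.2 + p.1, p.2)
  invFun p := (p.1 - p.2, p.2)
  left_inv p := by ext <;> simp
  right_inv p := by ext <;> simp

lemma wd_step {H : GaussianInt → ℂ} {V : GaussianInt → ℝ} (hV : Summable V)
    (hHV : ∀ q, ‖H q‖ ≤ V q) (A : Finset GaussianInt) {η : ℝ} (hη : 0 ≤ η)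
    (hA : ∀ β, β ∉ A → ∀ q, ‖H (q + β)‖ * ‖H q‖ ≤ η * (V (q + β) * V q)) :
    ‖∑' q, H q‖ ^ 2 ≤ ∑ β ∈ A, ‖∑' q, wdD β H q‖ + η * (∑' q, V q) ^ 2 := by
  have hV0 : ∀ q, 0 ≤ V q := fun q => (norm_nonneg _).trans (hHV q)
  have hHs : Summable (fun q => ‖H q‖) := hV.of_nonneg_of_le (fun _ => norm_nonneg _) hHV
  have hVV : Summable (fun p : GaussianInt × GaussianInt => V (p.2 + p.1) * V p.2) :=
    (wdShear.summable_iff).mpr (hV.mul_of_nonneg hV hV0 hV0)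
  have hHH : Summable (fun p : GaussianInt × GaussianInt => ‖H (p.2 + p.1)‖ * ‖H p.2‖) :=
    (wdShear.summable_iff).mpr
      (hHs.mul_of_nonneg hHs (fun _ => norm_nonneg _) (fun _ => norm_nonneg _))
  have hHn : Summable (fun p : GaussianInt × GaussianInt => ‖wdD p.1 H p.2‖) := by
    refine hHH.congr fun p => ?_
    simp [wdD]
  have hHc : Summable (fun p : GaussianInt × GaussianInt => wdD p.1 H p.2) := hHn.of_norm
  have e1 : (∑' q, H q) * (starRingEnd ℂ) (∑' q, H q) = ∑' β, ∑' q, wdD β H q := by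
    rw [Complex.conj_tsum, tsum_mul_tsum_of_summable_norm hHs (by simpa using hHs),
      ← wdShear.tsum_eq, ← hHc.tsum_prod]
    rfl
  have e2 : (∑' q, V q) ^ 2 = ∑' β, ∑' q, V (q + β) * V q := by
    rw [sq, hV.tsum_mul_tsum hV (hV.mul_of_nonneg hV hV0 hV0), ← wdShear.tsum_eq]
    exact hVV.tsum_prod
  have e3 : ‖∑' q, H q‖ ^ 2 = ‖∑' β, ∑' q, wdD β H q‖ := by
    rw [← e1, norm_mul, RCLike.norm_conj, sq]
  have hb : ∀ β, ‖∑' q, wdD β H q‖ ≤ ∑' q, ‖wdD β H q‖ := fun β =>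
    norm_tsum_le_tsum_norm (hHn.prod_factor β)
  have hs1 : Summable (fun β => ‖∑' q, wdD β H q‖) :=
    hHn.prod.of_nonneg_of_le (fun _ => norm_nonneg _) hb
  have hs2 : Summable (fun β => if β ∈ A then ‖∑' q, wdD β H q‖ else 0) :=
    summable_of_ne_finset_zero (s := A) fun β hβ => by simp [hβ]
  have hs3 : Summable (fun β => η * ∑' q, V (q + β) * V q) := hVV.prod.mul_left η
  rw [e3]
  calc _ ≤ ∑' β, ‖∑' q, wdD β H q‖ := norm_tsum_le_tsum_norm hs1
    _ ≤ ∑' β, ((if β ∈ A then ‖∑' q, wdD β H q‖ else 0) + η * ∑' q, V (q + β) * V q) := by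
        refine hs1.tsum_le_tsum (fun β => ?_) (hs2.add hs3)
        by_cases hβ : β ∈ A
        · simp only [hβ, if_true]
          have : 0 ≤ ∑' q, V (q + β) * V q := tsum_nonneg fun q => mul_nonneg (hV0 _) (hV0 _)
          nlinarith [mul_nonneg hη this]
        · simp only [hβ, if_false, zero_add]
          refine (hb β).trans ?_
          rw [← tsum_mul_left]
          refine (hHn.prod_factor β).tsum_le_tsum (fun q => ?_)
            ((hVV.prod_factor β).mul_left η)
          simpa [wdD] using hA β hβ q
    _ = _ := by
        rw [hs2.tsum_add hs3, tsum_mul_left, e2]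
        congr 1
        rw [tsum_eq_sum (s := A) fun β hβ => by simp [hβ]]
        exact Finset.sum_congr rfl fun β hβ => by simp [hβ]

def wdK (D : ℝ) : ℕ → ℝ
  | 0 => 1
  | m + 1 => wdK D m ^ 2 * (2 * D + 2)

lemma wdK_pos {D : ℝ} (hD : 0 ≤ D) : ∀ m, 0 < wdK D m
  | 0 => one_pos
  | m + 1 => by
    have := wdK_pos hD m
    simp only [wdK]
    positivity

def wdE : ℕ → ℕ
  | 0 => 0
  | m + 1 => 2 * wdE m + m

lemma wdE_eq : ∀ m, wdE m + (m + 1) = 2 ^ m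
  | 0 => rfl
  | m + 1 => by
    have := wdE_eq m
    simp only [wdE]
    omega

lemma wd_main {F : GaussianInt → ℂ} {V : GaussianInt → ℝ} (hV : Summable V)
    (hF1 : ∀ q, ‖F q‖ ≤ 1) (hHV : ∀ q, ‖F q‖ ≤ V q) (A : Finset GaussianInt)
    (hA1 : 1 ≤ A.card) {η : ℝ} (hη : 0 ≤ η)
    (hA : ∀ β, β ∉ A → ∀ q, ‖F (q + β)‖ * ‖F q‖ ≤ η * (V (q + β) * V q))
    {D : ℝ} (hD : 0 ≤ D) (M : ℕ) (hτ : (A.card : ℝ) ^ (2 * M) * (η * (∑' q, V q) ^ 2) ≤ D) :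
    ∀ m, m ≤ M → ‖∑' q, F q‖ ^ (2 ^ m) ≤ wdK D m * (A.card : ℝ) ^ wdE m *
      (∑ α : Fin m → A, ‖∑' q, wdIt m (fun i => (α i : GaussianInt)) F q‖ + 1) := by
  have hn : (1 : ℝ) ≤ A.card := by exact_mod_cast hA1
  intro m
  induction m with
  | zero =>
    intro _
    simp [wdK, wdE, wdIt]
  | succ m ih =>
    intro hm
    have ih := ih (by omega)
    set n : ℝ := (A.card : ℝ) with hndef
    set τ := η * (∑' q, V q) ^ 2 with hτdef
    have hτ0 : 0 ≤ τ := mul_nonneg hη (sq_nonneg _)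
    set X := ∑ α : Fin m → A, ‖∑' q, wdIt m (fun i => (α i : GaussianInt)) F q‖ with hX
    set Y := ∑ α : Fin (m + 1) → A, ‖∑' q, wdIt (m + 1) (fun i => (α i : GaussianInt)) F q‖
      with hY
    have hY0 : 0 ≤ Y := Finset.sum_nonneg fun _ _ => norm_nonneg _
    have hYeq : Y = ∑ α : Fin m → A, ∑ β ∈ A,
        ‖∑' q, wdD β (wdIt m (fun i => (α i : GaussianInt)) F) q‖ := by
      rw [hY, ← (Fin.consEquiv (fun _ : Fin (m + 1) => (A : Type))).sum_comp,
        Fintype.sum_prod_type, Finset.sum_comm]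
      refine Finset.sum_congr rfl fun α _ => ?_
      rw [← Finset.sum_coe_sort A]
      rfl
    have hX2 : X ^ 2 ≤ n ^ m * Y + D := by
      have h1 : X ^ 2 ≤ n ^ m * ∑ α : Fin m → A,
          ‖∑' q, wdIt m (fun i => (α i : GaussianInt)) F q‖ ^ 2 := by
        have := sq_sum_le_card_mul_sum_sq (s := (Finset.univ : Finset (Fin m → A)))
          (f := fun α => ‖∑' q, wdIt m (fun i => (α i : GaussianInt)) F q‖)
        simpa [hndef] using this
      have h2 : ∑ α : Fin m → A, ‖∑' q, wdIt m (fun i => (α i : GaussianInt)) F q‖ ^ 2 ≤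
          Y + n ^ m * τ := by
        have h3 : n ^ m * τ = ∑ _α : Fin m → A, τ := by simp [hndef]
        rw [hYeq, h3, ← Finset.sum_add_distrib]
        refine Finset.sum_le_sum fun α _ => ?_
        refine wd_step hV (fun q => (wdIt_le hF1 m _ q).trans (hHV q)) A hη fun β hβ q => ?_
        exact (mul_le_mul (wdIt_le hF1 m _ _) (wdIt_le hF1 m _ _) (norm_nonneg _)
          (norm_nonneg _)).trans (hA β hβ q)
      have h4 : n ^ m * (n ^ m * τ) ≤ D := by
        refine le_trans ?_ hτ
        rw [← mul_assoc, ← pow_add]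
        exact mul_le_mul_of_nonneg_right (pow_le_pow_right₀ hn (by omega)) hτ0
      calc X ^ 2 ≤ n ^ m * (Y + n ^ m * τ) :=
            h1.trans (mul_le_mul_of_nonneg_left h2 (by positivity))
        _ ≤ _ := by linarith
    have hnm : 1 ≤ n ^ m := one_le_pow₀ hn
    have h5 : (X + 1) ^ 2 ≤ (2 * D + 2) * (n ^ m * (Y + 1)) := by
      have : (X + 1) ^ 2 ≤ 2 * X ^ 2 + 2 := by nlinarith [sq_nonneg (X - 1)]
      have h6 : 0 ≤ D * (n ^ m * Y) := by positivity
      have h7 : D ≤ D * n ^ m := le_mul_of_one_le_right hD hnm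
      nlinarith
    have hK := wdK_pos hD m
    calc ‖∑' q, F q‖ ^ (2 ^ (m + 1)) = (‖∑' q, F q‖ ^ (2 ^ m)) ^ 2 := by
          rw [pow_succ, pow_mul]
      _ ≤ (wdK D m * n ^ wdE m * (X + 1)) ^ 2 := pow_le_pow_left₀ (by positivity) ih 2
      _ = (wdK D m ^ 2 * n ^ (2 * wdE m)) * (X + 1) ^ 2 := by ring
      _ ≤ (wdK D m ^ 2 * n ^ (2 * wdE m)) * ((2 * D + 2) * (n ^ m * (Y + 1))) :=
          mul_le_mul_of_nonneg_left h5 (by positivity)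
      _ = wdK D (m + 1) * n ^ wdE (m + 1) * (Y + 1) := by
          simp only [wdK, wdE]
          ring

/-! ### The explicit shape of the iterated differences -/

lemma e_mul_conj (s t : ℝ) : e s * (starRingEnd ℂ) (e t) = e (s - t) := by
  unfold e
  rw [← Complex.exp_conj, ← Complex.exp_add]
  congr 1
  simp only [map_mul, Complex.conj_ofReal, Complex.conj_I, map_ofNat, Complex.ofReal_sub]
  ring

lemma e_norm (t : ℝ) : ‖e t‖ = 1 := by
  unfold e
  rw [show (2 * Real.pi * Complex.I * t : ℂ) = ((2 * Real.pi * t : ℝ) : ℂ) * Complex.I by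
    push_cast; ring]
  exact Complex.norm_exp_ofReal_mul_I _

/-- Iterated additive differences on `ℂ`. -/
def wdΔ : (m : ℕ) → (Fin m → ℂ) → (ℂ → ℂ) → (ℂ → ℂ)
  | 0, _, g => g
  | m + 1, α, g => fun z => wdΔ m (fun i => α i.succ) g (z + α 0) - wdΔ m (fun i => α i.succ) g z

lemma wdΔ_comm (β : ℂ) (g : ℂ → ℂ) : ∀ (m : ℕ) (α : Fin m → ℂ) (z : ℂ),
    wdΔ m α (fun z => g (z + β) - g z) z = wdΔ m α g (z + β) - wdΔ m α g z := by
  intro m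
  induction m with
  | zero => intro α z; rfl
  | succ m ih =>
    intro α z
    simp only [wdΔ, ih]
    rw [add_right_comm z (α 0) β]
    ring

lemma wdΔ_sum {ι : Type} (s : Finset ι) (c : ι → ℂ) (g : ι → ℂ → ℂ) :
    ∀ (m : ℕ) (α : Fin m → ℂ) (z : ℂ),
    wdΔ m α (fun z => ∑ i ∈ s, c i * g i z) z = ∑ i ∈ s, c i * wdΔ m α (g i) z := by
  intro m
  induction m with
  | zero => intro α z; rfl
  | succ m ih =>
    intro α z
    simp only [wdΔ, ih, mul_sub, Finset.sum_sub_distrib]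

lemma wd_pow_diff (n : ℕ) (β z : ℂ) : (z + β) ^ n - z ^ n =
    ∑ i ∈ Finset.range n, (β ^ (n - i) * (n.choose i : ℂ)) * z ^ i := by
  rw [add_pow, Finset.sum_range_succ]
  simp only [Nat.sub_self, pow_zero, Nat.choose_self, Nat.cast_one, mul_one, add_sub_cancel_right]
  exact Finset.sum_congr rfl fun i _ => by ring

lemma wdΔ_succ_pow (m n : ℕ) (α : Fin (m + 1) → ℂ) (z : ℂ) :
    wdΔ (m + 1) α (fun z => z ^ n) z = ∑ i ∈ Finset.range n,
      (α 0 ^ (n - i) * (n.choose i : ℂ)) * wdΔ m (fun i => α i.succ) (fun z => z ^ i) z := by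
  have h := wdΔ_comm (α 0) (fun z => z ^ n) m (fun i => α i.succ) z
  simp only [wd_pow_diff] at h
  rw [wdΔ_sum (Finset.range n) (fun i => α 0 ^ (n - i) * (n.choose i : ℂ))
    (fun i z => z ^ i)] at h
  rw [h]
  rfl

lemma wdΔ_lt : ∀ (m n : ℕ), n < m → ∀ (α : Fin m → ℂ) (z : ℂ), wdΔ m α (fun z => z ^ n) z = 0 := by
  intro m
  induction m with
  | zero => intro n hn; omega
  | succ m ih =>
    intro n hn α z
    rw [wdΔ_succ_pow]
    refine Finset.sum_eq_zero fun i hi => ?_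
    rw [ih i (by have := Finset.mem_range.mp hi; omega), mul_zero]

lemma wdΔ_eq : ∀ (m : ℕ) (α : Fin m → ℂ) (z : ℂ),
    wdΔ m α (fun z => z ^ m) z = (m.factorial : ℂ) * ∏ v, α v := by
  intro m
  induction m with
  | zero => intro α z; simp [wdΔ]
  | succ m ih =>
    intro α z
    rw [wdΔ_succ_pow, Finset.sum_range_succ, ih, Finset.sum_eq_zero, Fin.prod_univ_succ]
    · simp [Nat.factorial_succ]
      ring
    · intro i hi
      rw [wdΔ_lt m i (Finset.mem_range.mp hi), mul_zero]

lemma wdΔ_top : ∀ (m : ℕ) (α : Fin m → ℂ) (z : ℂ), wdΔ m α (fun z => z ^ (m + 1)) z =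
    ((m + 1).factorial : ℂ) * (∏ v, α v) * (z + (∑ v, α v) / 2) := by
  intro m
  induction m with
  | zero => intro α z; simp [wdΔ]
  | succ m ih =>
    intro α z
    rw [wdΔ_succ_pow, Finset.sum_range_succ, Finset.sum_range_succ, ih, wdΔ_eq,
      Finset.sum_eq_zero, Fin.prod_univ_succ, Fin.sum_univ_succ]
    · have h1 : m + 1 + 1 - m = 2 := by omega
      have h2 : m + 1 + 1 - (m + 1) = 1 := by omega
      have h3 : ((m + 1 + 1).choose m : ℂ) = ((m : ℂ) + 2) * (m + 1) / 2 := by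
        have : (m + 1 + 1).choose m = (m + 1 + 1).choose 2 := by
          exact Nat.choose_symm_of_eq_add (show m + 1 + 1 = m + 2 from rfl)
        rw [this, Nat.cast_choose_two]
        push_cast
        ring
      rw [h1, h2, h3]
      simp [Nat.factorial_succ]
      ring
    · intro i hi
      rw [wdΔ_lt m i (Finset.mem_range.mp hi), mul_zero]

def wdF (c : ℝ) (l : ℂ) (g : ℂ → ℂ) (q : GaussianInt) : ℂ :=
  ((Real.exp (-c * gN q) : ℝ) : ℂ) * e ((l * g (q : ℂ)).re)

lemma wdIt_wdF (c : ℝ) (l : ℂ) (g : ℂ → ℂ) : ∀ (m : ℕ) (α : Fin m → GaussianInt) (q : GaussianInt),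
    wdIt m α (wdF c l g) q =
      ((Real.exp (-c * ∑ u : Fin m → Bool, gN ((∑ v, if u v then α v else 0) + q)) : ℝ) : ℂ) *
        e ((l * wdΔ m (fun i => (α i : ℂ)) g (q : ℂ)).re) := by
  intro m
  induction m with
  | zero => intro α q; simp [wdIt, wdΔ, wdF]
  | succ m ih =>
    intro α q
    simp only [wdIt, wdD, ih, map_mul, Complex.conj_ofReal]
    rw [mul_mul_mul_comm, e_mul_conj, ← Complex.ofReal_mul, ← Real.exp_add]
    congr 2
    · congr 1
      rw [← (Fin.consEquiv (fun _ : Fin (m + 1) => Bool)).sum_comp, Fintype.sum_prod_type]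
      simp only [Fintype.sum_bool, Fin.consEquiv, Equiv.coe_fn_mk, Fin.sum_univ_succ, Fin.cons_zero,
        Fin.cons_succ, if_true]
      rw [← mul_add]
      congr 1
      refine congrArg₂ (· + ·) ?_ ?_
      · refine Finset.sum_congr rfl fun u _ => ?_
        congr 1
        abel
      · refine Finset.sum_congr rfl fun u _ => ?_
        simp
    · simp only [wdΔ, GaussianInt.toComplex_add, mul_sub, Complex.sub_re]

/-- Exponential beats polynomial. -/
lemma wd_exp_poly (a p δ : ℝ) (ha : 0 < a) (hδ : 0 < δ) :
    ∃ B : ℝ, 0 ≤ B ∧ ∀ Q : ℝ, 1 ≤ Q → Q ^ p * Real.exp (-a * Q ^ δ) ≤ B := by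
  set N := ⌈p / δ⌉₊ with hN
  refine ⟨N.factorial / a ^ N, by positivity, fun Q hQ => ?_⟩
  have hQ0 : 0 < Q := by linarith
  have h1 : Q ^ p ≤ (Q ^ δ) ^ N := by
    rw [← Real.rpow_natCast, ← Real.rpow_mul hQ0.le]
    refine Real.rpow_le_rpow_of_exponent_le hQ ?_
    have := Nat.le_ceil (p / δ)
    rw [div_le_iff₀ hδ] at this
    linarith
  have hx : 0 < Q ^ δ := Real.rpow_pos_of_pos hQ0 _
  have h2 := Real.pow_div_factorial_le_exp (a * Q ^ δ) (by positivity) N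
  rw [neg_mul, Real.exp_neg, ← div_eq_mul_inv, div_le_iff₀ (Real.exp_pos _)]
  calc Q ^ p ≤ (Q ^ δ) ^ N := h1
    _ = N.factorial / a ^ N * ((a * Q ^ δ) ^ N / N.factorial) := by
        rw [mul_pow]
        field_simp
    _ ≤ _ := mul_le_mul_of_nonneg_left h2 (by positivity)

/-- The inner sum of the statement. -/
def wdT (m : ℕ) (Q0 : ℝ) (q1 r1 j : GaussianInt) (α : Fin m → GaussianInt) : ℂ :=
  ∑' q : GaussianInt,
    ((Real.exp (-(Real.pi / ((2 : ℝ) ^ m * Q0)) *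
        ∑ u : Fin m → Bool,
          gN ((∑ v, if u v then α v else 0) + q)) : ℝ) : ℂ)
      * e ((((j : ℂ) * (r1 : ℂ) / (q1 : ℂ) ^ (m + 1))
          * ((Nat.factorial (m + 1) : ℂ) * ∏ v, ((α v : GaussianInt) : ℂ))
          * ((q : ℂ) + (∑ v, ((α v : GaussianInt) : ℂ)) / 2)).re)

lemma wdT_zero (m : ℕ) (hm : 1 ≤ m) (Q0 : ℝ) (hQ : 2 ≤ Q0) (q1 r1 j : GaussianInt) :
    1 ≤ ‖wdT m Q0 q1 r1 j (fun _ => 0)‖ := by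
  have hQ0 : 0 < Q0 := by linarith
  have h : wdT m Q0 q1 r1 j (fun _ => 0) =
      ((∑' q : GaussianInt, Real.exp (-(Real.pi * (1 / Q0)) * gN q) : ℝ) : ℂ) := by
    rw [Complex.ofReal_tsum]
    refine tsum_congr fun q => ?_
    have h0 : ∏ v : Fin m, (((fun _ => 0 : Fin m → GaussianInt) v : GaussianInt) : ℂ) = 0 :=
      Finset.prod_eq_zero (Finset.mem_univ (⟨0, hm⟩ : Fin m)) (by simp)
    rw [h0]
    have h1 : e 0 = 1 := by simp [e]
    simp only [mul_zero, zero_mul, Complex.zero_re, h1, mul_one, ite_self, Finset.sum_const_zero,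
      zero_add, Finset.sum_const, Finset.card_univ, Fintype.card_pi, Fintype.card_bool,
      Finset.prod_const, Fintype.card_fin, nsmul_eq_mul]
    congr 2
    push_cast
    field_simp
  have hs := wd_sum_gN (a := 1 / Q0) (by positivity)
  rw [h, Complex.norm_real]
  refine le_trans ?_ (le_abs_self _)
  have := hs.le_tsum 0 (fun _ _ => (Real.exp_pos _).le)
  simpa [gN_zero] using this

lemma wd_aux (m : ℕ) (hm : 1 ≤ m) (ε : ℝ) (hε : 0 < ε) (_hε1 : ε < 1) : ∃ C : ℝ, 0 < C ∧
      ∀ Q0 : ℝ, 2 ≤ Q0 → ∀ q1 : GaussianInt, q1 ≠ 0 → ∀ r1 j : GaussianInt,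
      ‖Sk (m + 1) Q0 q1 r1 j‖ ^ (2 ^ m)
        ≤ C * Q0 ^ (((2 : ℝ) ^ m : ℝ) - ((m + 1 : ℕ) : ℝ) + ε) *
          ∑' α : {α : Fin m → GaussianInt // ∀ v, gN (α v) ≤ Q0 ^ ((1 : ℝ) + ε)},
            ‖wdT m Q0 q1 r1 j α‖ := by
  have hK1 : (1 : ℝ) ≤ 2 ^ m := one_le_pow₀ (by norm_num)
  have hK0 : (0 : ℝ) < 2 ^ m := by positivity
  obtain ⟨δ, hδ⟩ : ∃ δ : ℝ, δ = ε / 2 ^ m := ⟨_, rfl⟩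
  have hδ0 : 0 < δ := by rw [hδ]; positivity
  have hδε : δ ≤ ε := by rw [hδ]; exact div_le_self hε.le hK1
  obtain ⟨B, hB0, hB⟩ := wd_exp_poly (Real.pi / (4 * 2 ^ m)) ((1 + δ) * (2 * m : ℕ) + 2) δ
    (by positivity) hδ0
  have hC0 := wdC_nonneg
  obtain ⟨C1, hC1⟩ : ∃ C1 : ℝ, C1 = Real.exp Real.pi * wdC + 1 := ⟨_, rfl⟩
  have hC1p : 0 < C1 := by rw [hC1]; positivity
  obtain ⟨D, hD⟩ : ∃ D : ℝ, D = C1 ^ (2 * m) * (wdC * (2 * 2 ^ m)) ^ 2 * B := ⟨_, rfl⟩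
  have hD0 : 0 ≤ D := by rw [hD]; positivity
  have hKp := wdK_pos hD0 m
  refine ⟨2 * wdK D m * C1 ^ wdE m, by positivity, fun Q0 hQ q1 _ r1 j => ?_⟩
  have hQ0 : 0 < Q0 := by linarith
  have hQ1 : 1 ≤ Q0 := by linarith
  have hR1 : 1 ≤ Q0 ^ (1 + δ) := Real.one_le_rpow hQ1 (by linarith)
  obtain ⟨A, hA, hAc⟩ := wd_ball hR1
  have hAc' : (A.card : ℝ) ≤ C1 * Q0 ^ (1 + δ) := by
    rw [hC1]
    linarith
  set c : ℝ := Real.pi / ((2 : ℝ) ^ m * Q0) with hc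
  have hcp : 0 < c := by positivity
  set l : ℂ := (j : ℂ) * (r1 : ℂ) / (q1 : ℂ) ^ (m + 1) with hl
  set F := wdF c l (fun z => z ^ (m + 1)) with hF
  set V : GaussianInt → ℝ := fun q => Real.exp (-(Real.pi * (1 / (2 * 2 ^ m * Q0))) * gN q) with hVd
  have hc2 : Real.pi * (1 / (2 * 2 ^ m * Q0)) = c / 2 := by rw [hc]; field_simp
  have ha : 0 < 1 / (2 * 2 ^ m * Q0) := by positivity
  have hVs : Summable V := wd_sum_gN ha
  have hVle : ∑' q, V q ≤ wdC * (2 * 2 ^ m) * Q0 := by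
    have := wd_gN_le ha (by
      rw [div_le_one (by positivity)]
      nlinarith)
    refine this.trans (le_of_eq ?_)
    field_simp
  have hV0 : 0 ≤ ∑' q, V q := tsum_nonneg fun _ => (Real.exp_pos _).le
  have hFn : ∀ q, ‖F q‖ = Real.exp (-c * gN q) := by
    intro q
    rw [hF, wdF, norm_mul, e_norm, mul_one, Complex.norm_real, Real.norm_eq_abs,
      abs_of_pos (Real.exp_pos _)]
  have hF1 : ∀ q, ‖F q‖ ≤ 1 := by
    intro q
    rw [hFn, Real.exp_le_one_iff]
    nlinarith [gN_nonneg q]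
  have hFV : ∀ q, ‖F q‖ ≤ V q := by
    intro q
    rw [hFn, hVd]
    apply Real.exp_le_exp.mpr
    rw [hc2]
    nlinarith [gN_nonneg q]
  set η : ℝ := Real.exp (-(Real.pi / (4 * 2 ^ m)) * Q0 ^ δ) with hη
  have hη0 : 0 ≤ η := (Real.exp_pos _).le
  have hAt : ∀ β, β ∉ A → ∀ q, ‖F (q + β)‖ * ‖F q‖ ≤ η * (V (q + β) * V q) := by
    intro β hβ q
    have hβ' : Q0 ^ (1 + δ) < gN β := by
      by_contra h
      exact hβ ((hA β).mpr (not_lt.mp h))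
    rw [hFn, hFn, hVd, hη]
    simp only
    rw [← Real.exp_add, ← Real.exp_add, ← Real.exp_add]
    apply Real.exp_le_exp.mpr
    rw [hc2]
    have h1 : Real.pi / (4 * 2 ^ m) * Q0 ^ δ = c / 4 * Q0 ^ (1 + δ) := by
      rw [hc, Real.rpow_add hQ0, Real.rpow_one]
      field_simp
    have h2 := gN_par β q
    have h3 : c / 4 * Q0 ^ (1 + δ) ≤ c / 4 * (2 * gN (q + β) + 2 * gN q) :=
      mul_le_mul_of_nonneg_left (hβ'.le.trans h2) (by positivity)
    rw [neg_mul (Real.pi / (4 * 2 ^ m)), h1]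
    linarith
  have hA1 : 1 ≤ A.card := by
    refine Finset.card_pos.mpr ⟨0, (hA 0).mpr ?_⟩
    rw [gN_zero]
    linarith
  have hτ : (A.card : ℝ) ^ (2 * m) * (η * (∑' q, V q) ^ 2) ≤ D := by
    calc _ ≤ (C1 * Q0 ^ (1 + δ)) ^ (2 * m) * (η * (wdC * (2 * 2 ^ m) * Q0) ^ 2) := by
          gcongr
      _ = C1 ^ (2 * m) * (wdC * (2 * 2 ^ m)) ^ 2 *
          (Q0 ^ ((1 + δ) * (2 * m : ℕ) + 2) * η) := by
          rw [Real.rpow_add hQ0 ((1 + δ) * (2 * m : ℕ)) 2, Real.rpow_mul hQ0.le, Real.rpow_natCast,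
            Real.rpow_two]
          ring
      _ ≤ _ := by
          rw [hD]
          exact mul_le_mul_of_nonneg_left (hB Q0 hQ1) (by positivity)
  have key := wd_main hVs hF1 hFV A hA1 hη0 hAt hD0 m hτ m le_rfl
  have hSk : Sk (m + 1) Q0 q1 r1 j = ∑' q, F q := by
    refine tsum_congr fun q => ?_
    rw [hF, wdF, hc, hl, Nat.add_sub_cancel]
    congr 3
    · congr 1
      ring
    · congr 1
      ring
  have hT : ∀ α : Fin m → GaussianInt, ∑' q, wdIt m α F q = wdT m Q0 q1 r1 j α := by
    intro α
    refine tsum_congr fun q => ?_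
    rw [hF, wdIt_wdF, wdΔ_top, ← mul_assoc]
  simp only [hT] at key
  rw [hSk]
  have hfin : Finite {α : Fin m → GaussianInt // ∀ v, gN (α v) ≤ Q0 ^ ((1 : ℝ) + ε)} := by
    obtain ⟨A', hA', _⟩ := wd_ball (R := Q0 ^ ((1 : ℝ) + ε)) (Real.one_le_rpow hQ1 (by linarith))
    refine Finite.of_injective (β := Fin m → A') (fun α v => ⟨α.1 v, (hA' _).mpr (α.2 v)⟩) ?_
    intro α β h
    ext1
    funext v
    exact congrArg Subtype.val (congrFun h v)
  set Y := ∑' α : {α : Fin m → GaussianInt // ∀ v, gN (α v) ≤ Q0 ^ ((1 : ℝ) + ε)},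
            ‖wdT m Q0 q1 r1 j α‖ with hY
  have hYs : Summable (fun α : {α : Fin m → GaussianInt // ∀ v, gN (α v) ≤ Q0 ^ ((1 : ℝ) + ε)} =>
      ‖wdT m Q0 q1 r1 j α‖) := Summable.of_finite
  have hY1 : 1 ≤ Y := by
    refine (wdT_zero m hm Q0 hQ q1 r1 j).trans ?_
    exact hYs.le_tsum ⟨fun _ => 0, fun v => by rw [gN_zero]; positivity⟩
      (fun _ _ => norm_nonneg _)
  have hXY : ∑ α : Fin m → A, ‖wdT m Q0 q1 r1 j (fun i => (α i : GaussianInt))‖ ≤ Y := by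
    rw [← tsum_fintype (L := .unconditional _)]
    refine Summable.tsum_le_tsum_of_inj (fun α : Fin m → A => ⟨fun i => (α i : GaussianInt),
      fun v => ((hA _).mp (α v).2).trans
        (Real.rpow_le_rpow_of_exponent_le hQ1 (by linarith))⟩) ?_ (fun _ _ => norm_nonneg _)
        (fun _ => le_rfl) Summable.of_finite hYs
    intro α β h
    funext v
    exact Subtype.ext (congrFun (congrArg Subtype.val h) v)
  have hE : (wdE m : ℝ) + ((m + 1 : ℕ) : ℝ) = 2 ^ m := by exact_mod_cast wdE_eq m
  have hnE : (A.card : ℝ) ^ wdE m ≤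
      C1 ^ wdE m * Q0 ^ (((2 : ℝ) ^ m : ℝ) - ((m + 1 : ℕ) : ℝ) + ε) := by
    calc (A.card : ℝ) ^ wdE m ≤ (C1 * Q0 ^ (1 + δ)) ^ wdE m := by gcongr
      _ = C1 ^ wdE m * Q0 ^ ((1 + δ) * (wdE m : ℝ)) := by
          rw [mul_pow, Real.rpow_mul hQ0.le, Real.rpow_natCast]
      _ ≤ _ := by
          refine mul_le_mul_of_nonneg_left (Real.rpow_le_rpow_of_exponent_le hQ1 ?_) (by positivity)
          have h1 : δ * 2 ^ m = ε := by rw [hδ]; field_simp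
          have h2 : (0 : ℝ) ≤ ((m + 1 : ℕ) : ℝ) := Nat.cast_nonneg _
          nlinarith
  refine key.trans ?_
  calc _ ≤ wdK D m * (C1 ^ wdE m * Q0 ^ (((2 : ℝ) ^ m : ℝ) - ((m + 1 : ℕ) : ℝ) + ε)) * (2 * Y) := by
        gcongr
        linarith
    _ = _ := by ring

/-- **Weyl differencing for the `k`-th power sums** (inequality (37) of the paper).
For `k ≥ 2`, `κ = 2^{k-1}`, `ε ∈ (0,1)` there is `C(k,ε)` such that for `Q₀ ≥ 2`,
`q₁ ≠ 0` and `r₁, j ∈ ℤ[i]`,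
`|S_k(q₁,r₁,j)|^κ ≤ C Q₀^{κ-k+ε} ∑_{α, N(α_v) ≤ Q₀^{1+ε}}
  |∑_q exp(-(π/(κQ₀)) ∑_{u ∈ {0,1}^{k-1}} N(u·α+q))
      e(Re((j r₁/q₁^k)·k!α₁⋯α_{k-1}(q + (α₁+⋯+α_{k-1})/2)))|`. -/
theorem weyl_differencing_power_sum :
    ∀ k : ℕ, 2 ≤ k → ∀ ε : ℝ, 0 < ε → ε < 1 → ∃ C : ℝ, 0 < C ∧
      ∀ Q0 : ℝ, 2 ≤ Q0 → ∀ q1 : GaussianInt, q1 ≠ 0 → ∀ r1 j : GaussianInt,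
      ‖Sk k Q0 q1 r1 j‖ ^ (2 ^ (k - 1))
        ≤ C * Q0 ^ (((2 : ℝ) ^ (k - 1) : ℝ) - k + ε) *
          ∑' α : {α : Fin (k - 1) → GaussianInt // ∀ v, gN (α v) ≤ Q0 ^ ((1 : ℝ) + ε)},
            ‖∑' q : GaussianInt,
                ((Real.exp (-(Real.pi / ((2 : ℝ) ^ (k - 1) * Q0)) *
                    ∑ u : Fin (k - 1) → Bool,
                      gN ((∑ v, if u v then (α : Fin (k - 1) → GaussianInt) v else 0) + q)) : ℝ) : ℂ)
                  * e ((((j : ℂ) * (r1 : ℂ) / (q1 : ℂ) ^ k)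
                      * ((Nat.factorial k : ℂ) * ∏ v, (((α : Fin (k - 1) → GaussianInt) v : GaussianInt) : ℂ))
                      * ((q : ℂ) + (∑ v, (((α : Fin (k - 1) → GaussianInt) v : GaussianInt) : ℂ)) / 2)).re)‖ := by
  intro k hk ε hε hε1
  obtain ⟨m, rfl⟩ : ∃ m, k = m + 1 := ⟨k - 1, by omega⟩
  exact wd_aux m (by omega) ε hε hε1
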